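/- Suppose X'X/n → Q with Q symmetric positive definite, k₂ = 1, and Q₁₂ = 0. Then for every β ∈ ℝ^k with β₂ = 0 and every t ∈ ℝ^k there exist δ₀ > 0 and ρ₀ ∈ (0,∞) (depending only on t, Q, σ and α) such that: every sequence of estimators F̂_n(t) (measurable functions of Y) satisfying P_{n,β,σ}(|F̂_n(t) − F_{n,β,σ}(t)| > δ) → 0 for every δ > 0 also satisfies sup_{ϑ : ‖ϑ−β‖ < ρ₀/√n} P_{n,ϑ,σ}(|F̂_n(t) − F_{n,ϑ,σ}(t)| > δ₀) → 1 as n → ∞. -/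

import Mathlib

open MeasureTheory Matrix Real Filter Topology ENNReal NNReal

noncomputable section

/-- Euclidean norm of a finite tuple. -/
def enorm2 {ι : Type*} [Fintype ι] (v : ι → ℝ) : ℝ := Real.sqrt (∑ i, v i ^ 2)

/-- The `N(0, σ² I)` distribution on `ι → ℝ`, given by its Lebesgue density. -/
def gaussPi (ι : Type*) [Fintype ι] (σ2 : ℝ) : Measure (ι → ℝ) :=
  volume.withDensity fun x => ENNReal.ofReal
    ((2 * π * σ2) ^ (-(Fintype.card ι : ℝ) / 2) * Real.exp (-(enorm2 x) ^ 2 / (2 * σ2)))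

/-- The Lebesgue density of the `N(0, σ² Q⁻¹)` distribution on `ι → ℝ`
(for `Q` symmetric positive definite). -/
def gaussCovDens {ι : Type*} [Fintype ι] [DecidableEq ι] (σ2 : ℝ) (Q : Matrix ι ι ℝ)
    (x : ι → ℝ) : ℝ :=
  (2 * π * σ2) ^ (-(Fintype.card ι : ℝ) / 2) * Real.sqrt Q.det *
    Real.exp (-(x ⬝ᵥ Q.mulVec x) / (2 * σ2))

/-- The `N(0, σ² Q⁻¹)` distribution on `ι → ℝ` (for `Q` symmetric positive definite),
given by its Lebesgue density. -/
def gaussCov {ι : Type*} [Fintype ι] [DecidableEq ι] (σ2 : ℝ) (Q : Matrix ι ι ℝ) :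
    Measure (ι → ℝ) :=
  volume.withDensity fun x => ENNReal.ofReal (gaussCovDens σ2 Q x)

/-- The positive semidefinite square root of a positive semidefinite matrix
(the definition of the older Mathlib, since removed, over `ℝ`). -/
def Matrix.PosSemidef.sqrt {n : Type*} [Fintype n] [DecidableEq n]
    {A : Matrix n n ℝ} (hA : A.PosSemidef) : Matrix n n ℝ :=
  hA.1.eigenvectorUnitary.1 * diagonal (RCLike.ofReal ∘ Real.sqrt ∘ hA.1.eigenvalues) *
    (star hA.1.eigenvectorUnitary : Matrix n n ℝ)

open Classical in
/-- Symmetric positive semidefinite square root (junk value `0` off the psd cone). -/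
def msqrt {ι : Type*} [Fintype ι] [DecidableEq ι] (A : Matrix ι ι ℝ) : Matrix ι ι ℝ :=
  if h : A.PosSemidef then h.sqrt else 0

open Classical in
/-- Smallest eigenvalue of a symmetric matrix (junk value `0` otherwise). -/
def lamMin {ι : Type*} [Fintype ι] [DecidableEq ι] (A : Matrix ι ι ℝ) : ℝ :=
  if h : A.IsHermitian then ⨅ i, h.eigenvalues i else 0

open Classical in
/-- Largest eigenvalue of a symmetric matrix (junk value `0` otherwise). -/
def lamMax {ι : Type*} [Fintype ι] [DecidableEq ι] (A : Matrix ι ι ℝ) : ℝ :=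
  if h : A.IsHermitian then ⨆ i, h.eigenvalues i else 0

variable {n k₁ k₂ : ℕ}

/-- First block of columns of the design matrix. -/
def X1 (X : Matrix (Fin n) (Fin k₁ ⊕ Fin k₂) ℝ) : Matrix (Fin n) (Fin k₁) ℝ :=
  X.submatrix id Sum.inl

/-- Second block of columns of the design matrix. -/
def X2 (X : Matrix (Fin n) (Fin k₁ ⊕ Fin k₂) ℝ) : Matrix (Fin n) (Fin k₂) ℝ :=
  X.submatrix id Sum.inr

/-- Unrestricted least squares estimator. -/
def betaU (X : Matrix (Fin n) (Fin k₁ ⊕ Fin k₂) ℝ) (Y : Fin n → ℝ) : (Fin k₁ ⊕ Fin k₂) → ℝ :=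
  (Xᵀ * X)⁻¹.mulVec (Xᵀ.mulVec Y)

/-- Restricted least squares estimator. -/
def betaR (X : Matrix (Fin n) (Fin k₁ ⊕ Fin k₂) ℝ) (Y : Fin n → ℝ) : (Fin k₁ ⊕ Fin k₂) → ℝ :=
  Sum.elim (((X1 X)ᵀ * X1 X)⁻¹.mulVec ((X1 X)ᵀ.mulVec Y)) (fun _ => 0)

/-- Risk estimate of the restricted model. -/
def rR (X : Matrix (Fin n) (Fin k₁ ⊕ Fin k₂) ℝ) (σ2 : ℝ) (Y : Fin n → ℝ) : ℝ :=
  Y ⬝ᵥ Y - betaR X Y ⬝ᵥ (Xᵀ * X).mulVec (betaR X Y) + σ2 * (2 * k₁ - n)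

/-- Risk estimate of the unrestricted model. -/
def rU (X : Matrix (Fin n) (Fin k₁ ⊕ Fin k₂) ℝ) (σ2 : ℝ) (Y : Fin n → ℝ) : ℝ :=
  Y ⬝ᵥ Y - betaU X Y ⬝ᵥ (Xᵀ * X).mulVec (betaU X Y) + σ2 * (2 * (k₁ + k₂) - n)

/-- The model averaging weight `λ̂`. -/
def lamHat (α σ2 : ℝ) (X : Matrix (Fin n) (Fin k₁ ⊕ Fin k₂) ℝ) (Y : Fin n → ℝ) : ℝ :=
  Real.exp (-(α * rR X σ2 Y) / σ2) /
    (Real.exp (-(α * rR X σ2 Y) / σ2) + Real.exp (-(α * rU X σ2 Y) / σ2))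

/-- Leung and Barron's model averaging estimator `β̃`. -/
def mavg (α σ2 : ℝ) (X : Matrix (Fin n) (Fin k₁ ⊕ Fin k₂) ℝ) (Y : Fin n → ℝ) :
    (Fin k₁ ⊕ Fin k₂) → ℝ :=
  lamHat α σ2 X Y • betaR X Y + (1 - lamHat α σ2 X Y) • betaU X Y

/-- Projection on the column space of `X₁`. -/
def projR (X : Matrix (Fin n) (Fin k₁ ⊕ Fin k₂) ℝ) : Matrix (Fin n) (Fin n) ℝ :=
  X1 X * ((X1 X)ᵀ * X1 X)⁻¹ * (X1 X)ᵀ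

/-- Projection on the column space of `X`. -/
def projU (X : Matrix (Fin n) (Fin k₁ ⊕ Fin k₂) ℝ) : Matrix (Fin n) (Fin n) ℝ :=
  X * (Xᵀ * X)⁻¹ * Xᵀ

/-- The distribution `P_{n,β,σ}` of `Y = Xβ + u`, `u ~ N(0, σ² Iₙ)`. -/
def Pmeas (X : Matrix (Fin n) (Fin k₁ ⊕ Fin k₂) ℝ) (β : (Fin k₁ ⊕ Fin k₂) → ℝ) (σ2 : ℝ) :
    Measure (Fin n → ℝ) :=
  (gaussPi (Fin n) σ2).map (fun u => X.mulVec β + u)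

/-- The function `h_{a,b}(ξ) = ξ / (1 + a exp(−ξ²/b))`. -/
def hfun (a b ξ : ℝ) : ℝ := ξ / (1 + a * Real.exp (-ξ ^ 2 / b))

/-- The inverse `g_{a,b}` of `h_{a,b}`. -/
def gfun (a b : ℝ) : ℝ → ℝ := Function.invFun (hfun a b)

open Classical in
/-- `g(‖w‖) w / ‖w‖`, with the convention that this is `0` for `w = 0`. -/
def gdir (a b : ℝ) {ι : Type*} [Fintype ι] (w : ι → ℝ) : ι → ℝ :=
  if w = 0 then 0 else (gfun a b (enorm2 w) / enorm2 w) • w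


/-- The finite-sample density `f_{n,β,σ}` of `√n(β̃ − β)` (Theorem 3 of the paper). -/
def fdens {n k₁ k₂ : ℕ} (X : Matrix (Fin n) (Fin k₁ ⊕ Fin k₂) ℝ)
    (β : (Fin k₁ ⊕ Fin k₂) → ℝ) (σ2 α : ℝ) (t : (Fin k₁ ⊕ Fin k₂) → ℝ) : ℝ :=
  let a := Real.exp (2 * α * k₂)
  let b := σ2 / α
  let S := (X2 X)ᵀ * (1 - projR X) * X2 X
  let w := (Real.sqrt n)⁻¹ • (msqrt S).mulVec ((t ∘ Sum.inr) + Real.sqrt n • (β ∘ Sum.inr))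
  (2 * π * σ2) ^ (-((k₁ : ℝ) + k₂) / 2) * Real.sqrt (((n : ℝ)⁻¹ • (Xᵀ * X)).det) *
    Real.exp (-(enorm2 ((Real.sqrt n)⁻¹ •
        ((msqrt ((X1 X)ᵀ * X1 X)).mulVec (t ∘ Sum.inl) +
          ((msqrt ((X1 X)ᵀ * X1 X))⁻¹ * (X1 X)ᵀ * X2 X).mulVec (t ∘ Sum.inr)))) ^ 2 /
      (2 * σ2)) *
    (1 + Real.exp (-(α / σ2) * gfun a b (enorm2 w) ^ 2 + 2 * α * k₂)) ^ (k₂ : ℕ) *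
    (1 + (2 * α / σ2) * gfun a b (enorm2 w) ^ 2 *
        (1 + Real.exp ((α / σ2) * gfun a b (enorm2 w) ^ 2 - 2 * α * k₂))⁻¹)⁻¹ *
    Real.exp (-(enorm2 (gdir a b w - (msqrt S).mulVec (β ∘ Sum.inr))) ^ 2 / (2 * σ2))

/-- The density `f_{∞,γ}` of the limiting distribution (formula (13) of the paper),
stated for a general symmetric positive definite matrix in place of `Q`. -/
def fInfty {k₁ k₂ : ℕ} (Q : Matrix (Fin k₁ ⊕ Fin k₂) (Fin k₁ ⊕ Fin k₂) ℝ) (σ2 α : ℝ)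
    (γ : Fin k₂ → ℝ) (t : (Fin k₁ ⊕ Fin k₂) → ℝ) : ℝ :=
  let a := Real.exp (2 * α * k₂)
  let b := σ2 / α
  let S := Q.toBlocks₂₂ - Q.toBlocks₂₁ * Q.toBlocks₁₁⁻¹ * Q.toBlocks₁₂
  let w := (msqrt S).mulVec ((t ∘ Sum.inr) + γ)
  (2 * π * σ2) ^ (-((k₁ : ℝ) + k₂) / 2) * Real.sqrt Q.det *
    Real.exp (-(enorm2 ((msqrt Q.toBlocks₁₁).mulVec (t ∘ Sum.inl) +
        ((msqrt Q.toBlocks₁₁)⁻¹ * Q.toBlocks₁₂).mulVec (t ∘ Sum.inr))) ^ 2 / (2 * σ2)) *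
    (1 + Real.exp (-(α / σ2) * gfun a b (enorm2 w) ^ 2 + 2 * α * k₂)) ^ (k₂ : ℕ) *
    (1 + (2 * α / σ2) * gfun a b (enorm2 w) ^ 2 *
        (1 + Real.exp ((α / σ2) * gfun a b (enorm2 w) ^ 2 - 2 * α * k₂))⁻¹)⁻¹ *
    Real.exp (-(enorm2 (gdir a b w - (msqrt S).mulVec γ)) ^ 2 / (2 * σ2))


/-- The limiting law (12): the distribution of
`B_∞γ + C_∞Z₁ + [1 + exp(2αk₂) exp(−α‖Z₂ + (Q₂₂ − Q₂₁Q₁₁⁻¹Q₁₂)^{1/2}γ‖²/σ²)]⁻¹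
  · (D_∞Z₂ − B_∞γ)` with `Z₁ ~ N(0, σ²I_{k₁})`, `Z₂ ~ N(0, σ²I_{k₂})` independent. -/
def limitLaw {k₁ k₂ : ℕ} (Q : Matrix (Fin k₁ ⊕ Fin k₂) (Fin k₁ ⊕ Fin k₂) ℝ) (σ2 α : ℝ)
    (γ : Fin k₂ → ℝ) : Measure ((Fin k₁ ⊕ Fin k₂) → ℝ) :=
  ((gaussPi (Fin k₁) σ2).prod (gaussPi (Fin k₂) σ2)).map
    (fun Z : (Fin k₁ → ℝ) × (Fin k₂ → ℝ) =>
      (fromRows (Q.toBlocks₁₁⁻¹ * Q.toBlocks₁₂) (-1)).mulVec γ +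
      (fromRows (msqrt Q.toBlocks₁₁)⁻¹ 0).mulVec Z.1 +
      (1 + Real.exp (2 * α * k₂) *
          Real.exp (-α * (enorm2 (Z.2 +
            (msqrt (Q.toBlocks₂₂ - Q.toBlocks₂₁ * Q.toBlocks₁₁⁻¹ * Q.toBlocks₁₂)).mulVec
              γ)) ^ 2 / σ2))⁻¹ •
        ((fromRows
            (-(Q.toBlocks₁₁⁻¹ * Q.toBlocks₁₂ *
              (msqrt (Q.toBlocks₂₂ - Q.toBlocks₂₁ * Q.toBlocks₁₁⁻¹ * Q.toBlocks₁₂))⁻¹))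
            ((msqrt (Q.toBlocks₂₂ - Q.toBlocks₂₁ * Q.toBlocks₁₁⁻¹ * Q.toBlocks₁₂))⁻¹)).mulVec
            Z.2 -
          (fromRows (Q.toBlocks₁₁⁻¹ * Q.toBlocks₁₂) (-1)).mulVec γ))

open ProbabilityTheory in
theorem gaussPi_dens {ι : Type*} [Fintype ι] (σ2 : ℝ) (hσ : 0 < σ2) (x : ι → ℝ) :
    (2 * π * σ2) ^ (-(Fintype.card ι : ℝ) / 2) * Real.exp (-(enorm2 x) ^ 2 / (2 * σ2)) =
      ∏ i, gaussianPDFReal 0 σ2.toNNReal (x i) := by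
  simp only [gaussianPDFReal, Finset.prod_mul_distrib, ← Real.exp_sum, enorm2]
  rw [Real.sq_sqrt (Finset.sum_nonneg fun i _ => sq_nonneg _)]
  congr 1
  · rw [Finset.prod_const, Finset.card_univ, Real.coe_toNNReal _ hσ.le, ← Real.rpow_natCast,
      Real.sqrt_eq_rpow, ← Real.rpow_neg (by positivity), ← Real.rpow_mul (by positivity)]
    congr 1; ring
  · congr 1
    rw [Real.coe_toNNReal _ hσ.le, ← Finset.sum_div, ← Finset.sum_neg_distrib]
    simp

open ProbabilityTheory in
theorem gaussPi_eq_pi {ι : Type*} [Fintype ι] (σ2 : ℝ) (hσ : 0 < σ2) :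
    gaussPi ι σ2 = Measure.pi (fun _ : ι => gaussianReal 0 σ2.toNNReal) := by
  have hv : σ2.toNNReal ≠ 0 := by simpa using hσ
  symm
  apply Measure.pi_eq
  intro s hs
  rw [gaussPi, withDensity_apply _ (MeasurableSet.univ_pi hs)]
  simp_rw [gaussPi_dens σ2 hσ]
  rw [← ofReal_integral_eq_lintegral_ofReal]
  · rw [volume_pi, Measure.restrict_pi_pi, integral_fintype_prod_eq_prod, ENNReal.ofReal_prod_of_nonneg]
    · refine Finset.prod_congr rfl fun i _ => ?_
      rw [gaussianReal_apply_eq_integral _ hv]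
    · intro i _
      exact integral_nonneg fun x => gaussianPDFReal_nonneg _ _ _
  · rw [volume_pi, Measure.restrict_pi_pi]
    exact Integrable.fintype_prod (f := fun (i : ι) (y : ℝ) => gaussianPDFReal 0 σ2.toNNReal y) fun i =>
      (integrable_gaussianPDFReal 0 σ2.toNNReal).integrableOn
  · exact ae_of_all _ fun x => Finset.prod_nonneg fun i _ => gaussianPDFReal_nonneg _ _ _

theorem gaussPi_prob {ι : Type*} [Fintype ι] (σ2 : ℝ) (hσ : 0 < σ2) :
    IsProbabilityMeasure (gaussPi ι σ2) := by
  rw [gaussPi_eq_pi σ2 hσ]; infer_instance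

open ProbabilityTheory in
theorem gaussPi_charFun {ι κ : Type*} [Fintype ι] [Fintype κ] [DecidableEq κ] [DecidableEq ι]
    (σ2 : ℝ) (hσ : 0 < σ2) (M : Matrix ι κ ℝ) (L : StrongDual ℝ (ι → ℝ)) :
    charFunDual ((gaussPi κ σ2).map (fun z => M.mulVec z)) L =
      Complex.exp (-(σ2 / 2 * ((fun i => L (Pi.single i 1)) ⬝ᵥ
        (M * Mᵀ).mulVec (fun i => L (Pi.single i 1))) : ℝ)) := by
  let T : (κ → ℝ) →L[ℝ] (ι → ℝ) := LinearMap.toContinuousLinearMap (Matrix.mulVecLin M)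
  have hT : (fun z => M.mulVec z) = T := by ext; simp [T]
  have := gaussPi_prob (ι := κ) σ2 hσ
  rw [hT, charFunDual_map, gaussPi_eq_pi σ2 hσ, charFunDual_pi]
  have hL : ∀ x, L x = ∑ i, x i * L (Pi.single i 1) := by
    intro x
    conv_lhs => rw [← Finset.univ_sum_single x]
    simp only [map_sum]
    refine Finset.sum_congr rfl fun i _ => ?_
    rw [← smul_eq_mul, ← map_smul]; congr 1
    ext j; simp [Pi.single_apply]
  have h1 : ∀ i : κ, charFunDual (gaussianReal 0 σ2.toNNReal)
      ((L.comp T).comp (ContinuousLinearMap.single ℝ (fun _ : κ => ℝ) i)) =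
      Complex.exp (-(σ2 / 2 * (∑ j, M j i * L (Pi.single j 1)) ^ 2 : ℝ)) := by
    intro i
    rw [charFunDual_eq_charFun_map_one]
    have : ((L.comp T).comp (ContinuousLinearMap.single ℝ (fun _ : κ => ℝ) i) : ℝ → ℝ) =
       ((∑ j, M j i * L (Pi.single j 1)) * ·) := by
      ext y
      simp only [ContinuousLinearMap.coe_comp, Function.comp_apply]
      rw [hL, Finset.sum_mul]
      refine Finset.sum_congr rfl fun j _ => ?_
      simp [T]; ring
    rw [this, gaussianReal_map_const_mul, charFun_gaussianReal]
    congr 1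
    simp [max_eq_left hσ.le]
    ring
  have h2 : (fun i => L (Pi.single i 1)) ⬝ᵥ (M * Mᵀ).mulVec (fun i => L (Pi.single i 1)) =
      ∑ i, (∑ j, M j i * L (Pi.single j 1)) ^ 2 := by
    rw [← Matrix.mulVec_mulVec, Matrix.dotProduct_mulVec, Matrix.vecMul_eq_sum, ]
    simp only [dotProduct, Matrix.mulVec, Matrix.transpose_apply]
    refine Finset.sum_congr rfl fun i _ => ?_
    rw [sq]; congr 1
    simp [Finset.sum_apply, mul_comm]
  rw [Finset.prod_congr rfl fun i _ => h1 i, ← Complex.exp_sum, h2]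
  congr 1
  push_cast
  rw [Finset.mul_sum, Finset.sum_neg_distrib]

theorem gaussPi_map_eq {ι κ κ' : Type*} [Fintype ι] [Fintype κ] [Fintype κ'] [DecidableEq κ]
    [DecidableEq κ'] [DecidableEq ι]
    (σ2 : ℝ) (hσ : 0 < σ2) (M : Matrix ι κ ℝ) (N : Matrix ι κ' ℝ) (h : M * Mᵀ = N * Nᵀ) :
    (gaussPi κ σ2).map (fun z => M.mulVec z) = (gaussPi κ' σ2).map (fun z => N.mulVec z) := by
  have := gaussPi_prob (ι := κ) σ2 hσ
  have := gaussPi_prob (ι := κ') σ2 hσ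
  have h1 : IsProbabilityMeasure ((gaussPi κ σ2).map (fun z => M.mulVec z)) :=
    Measure.isProbabilityMeasure_map (by fun_prop)
  have h2 : IsProbabilityMeasure ((gaussPi κ' σ2).map (fun z => N.mulVec z)) :=
    Measure.isProbabilityMeasure_map (by fun_prop)
  apply Measure.ext_of_charFunDual
  ext L
  rw [gaussPi_charFun σ2 hσ, gaussPi_charFun σ2 hσ, h]

theorem enorm2_sq {ι : Type*} [Fintype ι] (v : ι → ℝ) : enorm2 v ^ 2 = ∑ i, v i ^ 2 := by
  rw [enorm2, Real.sq_sqrt (Finset.sum_nonneg fun i _ => sq_nonneg _)]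

theorem gauss_ptwise {ι : Type*} [Fintype ι] (σ2 : ℝ) (hσ : 0 < σ2) (d y : ι → ℝ) (K : ℝ)
    (hK : 0 < K) :
    Real.exp (-(enorm2 (y - d)) ^ 2 / (2 * σ2)) ≤
      K * Real.exp (-(enorm2 y) ^ 2 / (2 * σ2)) + Real.exp (enorm2 d ^ 2 / σ2) / K *
        Real.exp (-(enorm2 (y - (2 : ℝ) • d)) ^ 2 / (2 * σ2)) := by
  have key : Real.exp (-(enorm2 (y - d)) ^ 2 / (2 * σ2)) ^ 2 =
      Real.exp (-(enorm2 y) ^ 2 / (2 * σ2)) * Real.exp (-(enorm2 (y - (2 : ℝ) • d)) ^ 2 / (2 * σ2)) *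
        Real.exp (enorm2 d ^ 2 / σ2) := by
    rw [sq, ← Real.exp_add, ← Real.exp_add, ← Real.exp_add]
    congr 1
    have : 2 * enorm2 (y - d) ^ 2 = enorm2 y ^ 2 + enorm2 (y - (2:ℝ) • d) ^ 2 - 2 * enorm2 d ^ 2 := by
      simp only [enorm2_sq, Finset.mul_sum, ← Finset.sum_add_distrib, ← Finset.sum_sub_distrib]
      refine Finset.sum_congr rfl fun i _ => ?_
      simp; ring
    field_simp
    linarith
  set p := Real.exp (-(enorm2 y) ^ 2 / (2 * σ2))
  set q := Real.exp (-(enorm2 (y - (2 : ℝ) • d)) ^ 2 / (2 * σ2))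
  set c := Real.exp (enorm2 d ^ 2 / σ2)
  set r := Real.exp (-(enorm2 (y - d)) ^ 2 / (2 * σ2))
  have hp : 0 < p := Real.exp_pos _
  have hq : 0 < q := Real.exp_pos _
  have hc : 0 < c := Real.exp_pos _
  apply le_of_sq_le_sq _ (by positivity)
  rw [key]
  have e : (K * p) * (c / K * q) = p * q * c := by field_simp
  nlinarith [sq_nonneg (K * p - c / K * q), mul_pos (mul_pos hp hq) hc]

theorem gauss_shift {ι : Type*} [Fintype ι] (σ2 : ℝ) (hσ : 0 < σ2) (d : ι → ℝ) (E : Set (ι → ℝ))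
    (hE : MeasurableSet E) :
    gaussPi ι σ2 {u | d + u ∈ E} = ∫⁻ y in E, ENNReal.ofReal
    ((2 * π * σ2) ^ (-(Fintype.card ι : ℝ) / 2) * Real.exp (-(enorm2 (y - d)) ^ 2 / (2 * σ2))) := by
  have hm : MeasurableSet {u | d + u ∈ E} := (measurable_const_add d) hE
  rw [gaussPi, withDensity_apply _ hm, ← lintegral_indicator hm, ← lintegral_indicator hE,
    ← lintegral_sub_right_eq_self _ d]
  refine lintegral_congr fun y => ?_
  simp only [Set.indicator, Set.mem_ofPred_eq]
  have e : d + (y - d) = y := add_sub_cancel _ _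
  by_cases hy : y ∈ E <;> simp [e, hy]

theorem gauss_contig {ι : Type*} [Fintype ι] (σ2 : ℝ) (hσ : 0 < σ2) (d : ι → ℝ) (E : Set (ι → ℝ))
    (hE : MeasurableSet E) (K : ℝ) (hK : 0 < K) :
    gaussPi ι σ2 {u | d + u ∈ E} ≤ ENNReal.ofReal K * gaussPi ι σ2 E +
      ENNReal.ofReal (Real.exp (enorm2 d ^ 2 / σ2) / K) := by
  have := gaussPi_prob (ι := ι) σ2 hσ
  set C := Real.exp (enorm2 d ^ 2 / σ2) / K with hC
  have hCp : 0 < C := by positivity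
  have h0 : gaussPi ι σ2 E = gaussPi ι σ2 {u | (0 : ι → ℝ) + u ∈ E} := by simp
  calc gaussPi ι σ2 {u | d + u ∈ E}
      ≤ ENNReal.ofReal K * gaussPi ι σ2 E +
        ENNReal.ofReal C * gaussPi ι σ2 {u | (2:ℝ) • d + u ∈ E} := by
        have hmeas : ∀ w : ι → ℝ, Measurable fun y : ι → ℝ => ENNReal.ofReal
          ((2 * π * σ2) ^ (-(Fintype.card ι : ℝ) / 2) *
            Real.exp (-(enorm2 (y - w)) ^ 2 / (2 * σ2))) := by
          intro w
          simp only [enorm2_sq]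
          fun_prop
        rw [h0, gauss_shift σ2 hσ d E hE, gauss_shift σ2 hσ 0 E hE, gauss_shift σ2 hσ _ E hE,
          ← lintegral_const_mul _ (hmeas _), ← lintegral_const_mul _ (hmeas _),
          ← lintegral_add_left ((hmeas _).const_mul _)]
        refine lintegral_mono fun y => ?_
        simp only
        rw [← ENNReal.ofReal_mul hK.le, ← ENNReal.ofReal_mul hCp.le, ← ENNReal.ofReal_add (by positivity) (by positivity)]
        apply ENNReal.ofReal_le_ofReal
        have h := mul_le_mul_of_nonneg_left (gauss_ptwise σ2 hσ d y K hK)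
          (show 0 ≤ (2 * π * σ2) ^ (-(Fintype.card ι : ℝ) / 2) by positivity)
        rw [sub_zero]
        refine h.trans (le_of_eq ?_)
        ring
    _ ≤ _ := by
        gcongr
        calc _ ≤ ENNReal.ofReal C * 1 := by gcongr; exact prob_le_one
          _ = _ := by simp

theorem Pmeas_apply {n k₁ k₂ : ℕ} (X : Matrix (Fin n) (Fin k₁ ⊕ Fin k₂) ℝ)
    (β : (Fin k₁ ⊕ Fin k₂) → ℝ) (σ2 : ℝ) (E : Set (Fin n → ℝ)) (hE : MeasurableSet E) :
    Pmeas X β σ2 E = gaussPi (Fin n) σ2 {u | X.mulVec β + u ∈ E} := by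
  rw [Pmeas, Measure.map_apply (by fun_prop) hE]; rfl

theorem Pmeas_prob {n k₁ k₂ : ℕ} (X : Matrix (Fin n) (Fin k₁ ⊕ Fin k₂) ℝ)
    (β : (Fin k₁ ⊕ Fin k₂) → ℝ) (σ2 : ℝ) (hσ : 0 < σ2) : IsProbabilityMeasure (Pmeas X β σ2) := by
  have := gaussPi_prob (ι := Fin n) σ2 hσ
  exact Measure.isProbabilityMeasure_map (by fun_prop)

theorem Pmeas_contig {n k₁ k₂ : ℕ} (X : Matrix (Fin n) (Fin k₁ ⊕ Fin k₂) ℝ)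
    (β ϑ : (Fin k₁ ⊕ Fin k₂) → ℝ) (σ2 : ℝ) (hσ : 0 < σ2) (E : Set (Fin n → ℝ))
    (hE : MeasurableSet E) (K : ℝ) (hK : 0 < K) :
    Pmeas X ϑ σ2 E ≤ ENNReal.ofReal K * Pmeas X β σ2 E +
      ENNReal.ofReal (Real.exp (((ϑ - β) ⬝ᵥ (Xᵀ * X).mulVec (ϑ - β)) / σ2) / K) := by
  have h := gauss_contig σ2 hσ (X.mulVec (ϑ - β)) {u | X.mulVec β + u ∈ E}
    ((measurable_const_add _) hE) K hK
  rw [Pmeas_apply _ _ _ _ hE, Pmeas_apply _ _ _ _ hE]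
  have e1 : {u | X.mulVec (ϑ - β) + u ∈ {u | X.mulVec β + u ∈ E}} = {u | X.mulVec ϑ + u ∈ E} := by
    ext u
    simp only [Set.mem_ofPred_eq, Matrix.mulVec_sub]
    rw [← add_assoc, add_sub_cancel]
  have e2 : enorm2 (X.mulVec (ϑ - β)) ^ 2 = (ϑ - β) ⬝ᵥ (Xᵀ * X).mulVec (ϑ - β) := by
    rw [← Matrix.mulVec_mulVec, Matrix.dotProduct_mulVec, Matrix.vecMul_transpose, enorm2_sq]
    simp [dotProduct, sq]
  rwa [e1, e2] at h

theorem Pmeas_contig_seq {k₁ k₂ : ℕ} (X : ∀ n : ℕ, Matrix (Fin n) (Fin k₁ ⊕ Fin k₂) ℝ)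
    (β : (Fin k₁ ⊕ Fin k₂) → ℝ) (ϑ : ℕ → (Fin k₁ ⊕ Fin k₂) → ℝ) (σ2 : ℝ) (hσ : 0 < σ2)
    (E : ∀ n : ℕ, Set (Fin n → ℝ)) (hE : ∀ n, MeasurableSet (E n)) (C : ℝ)
    (hC : ∀ᶠ n in atTop, (ϑ n - β) ⬝ᵥ ((X n)ᵀ * X n).mulVec (ϑ n - β) ≤ C)
    (h0 : Tendsto (fun n => Pmeas (X n) β σ2 (E n)) atTop (𝓝 0)) :
    Tendsto (fun n => Pmeas (X n) (ϑ n) σ2 (E n)) atTop (𝓝 0) := by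
  rw [ENNReal.tendsto_nhds_zero]
  intro ε hε
  obtain ⟨r, hr0, hrε⟩ := ENNReal.lt_iff_exists_nnreal_btwn.1 hε
  have hr : (0 : ℝ) < r := by exact_mod_cast hr0
  set K : ℝ := Real.exp (C / σ2) / (r / 2) with hKdef
  have hK : 0 < K := by positivity
  have h1 : Tendsto (fun n => ENNReal.ofReal K * Pmeas (X n) β σ2 (E n)) atTop (𝓝 0) := by
    have := ENNReal.Tendsto.const_mul (a := ENNReal.ofReal K) h0 (Or.inr (by simp))
    simpa using this
  have h2 := (ENNReal.tendsto_nhds_zero.1 h1) (ENNReal.ofReal (r / 2)) (by simpa using hr)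
  filter_upwards [hC, h2] with n hn1 hn2
  refine (Pmeas_contig (X n) β (ϑ n) σ2 hσ (E n) (hE n) K hK).trans ?_
  have h3 : Real.exp (((ϑ n - β) ⬝ᵥ ((X n)ᵀ * X n).mulVec (ϑ n - β)) / σ2) / K ≤ r / 2 := by
    rw [div_le_iff₀ hK, hKdef]
    have : Real.exp (((ϑ n - β) ⬝ᵥ ((X n)ᵀ * X n).mulVec (ϑ n - β)) / σ2) ≤ Real.exp (C / σ2) := by
      gcongr
    refine this.trans (le_of_eq ?_)
    field_simp
  calc _ ≤ ENNReal.ofReal (r / 2) + ENNReal.ofReal (r / 2) := by gcongr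
    _ = r := by rw [← ENNReal.ofReal_add (by positivity) (by positivity)]; simp
    _ ≤ ε := hrε.le

/-- rescaled restricted estimator -/
def Rvec {k₁ k₂ : ℕ} (A : Matrix (Fin k₁ ⊕ Fin k₂) (Fin k₁ ⊕ Fin k₂) ℝ)
    (w : (Fin k₁ ⊕ Fin k₂) → ℝ) : (Fin k₁ ⊕ Fin k₂) → ℝ :=
  Sum.elim (A.toBlocks₁₁⁻¹.mulVec (w ∘ Sum.inl)) (fun _ => 0)

/-- quadratic form in the weight -/
def qfun {k₁ k₂ : ℕ} (A : Matrix (Fin k₁ ⊕ Fin k₂) (Fin k₁ ⊕ Fin k₂) ℝ)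
    (w : (Fin k₁ ⊕ Fin k₂) → ℝ) : ℝ :=
  w ⬝ᵥ A⁻¹.mulVec w - (w ∘ Sum.inl) ⬝ᵥ A.toBlocks₁₁⁻¹.mulVec (w ∘ Sum.inl)

/-- the weight as a function of the rescaled score -/
def lamfun {k₁ k₂ : ℕ} (α σ2 : ℝ) (A : Matrix (Fin k₁ ⊕ Fin k₂) (Fin k₁ ⊕ Fin k₂) ℝ)
    (w : (Fin k₁ ⊕ Fin k₂) → ℝ) : ℝ :=
  (1 + Real.exp (α / σ2 * (qfun A w - 2 * σ2 * k₂)))⁻¹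

/-- the rescaled estimator as a function of the rescaled score -/
def Mfun {k₁ k₂ : ℕ} (α σ2 : ℝ) (A : Matrix (Fin k₁ ⊕ Fin k₂) (Fin k₁ ⊕ Fin k₂) ℝ)
    (w : (Fin k₁ ⊕ Fin k₂) → ℝ) : (Fin k₁ ⊕ Fin k₂) → ℝ :=
  lamfun α σ2 A w • Rvec A w + (1 - lamfun α σ2 A w) • A⁻¹.mulVec w

theorem quad_expand {ι : Type*} [Fintype ι] [DecidableEq ι] (S : Matrix ι ι ℝ) (hS : Sᵀ = S)
    (hdet : IsUnit S.det) (b w : ι → ℝ) (c : ℝ) :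
    (S⁻¹.mulVec (S.mulVec b + c • w)) ⬝ᵥ S.mulVec (S⁻¹.mulVec (S.mulVec b + c • w)) =
      b ⬝ᵥ S.mulVec b + 2 * c * (b ⬝ᵥ w) + c ^ 2 * (w ⬝ᵥ S⁻¹.mulVec w) := by
  rw [Matrix.mulVec_mulVec, Matrix.mul_nonsing_inv _ hdet, Matrix.one_mulVec, Matrix.mulVec_add,
    Matrix.mulVec_mulVec, Matrix.nonsing_inv_mul _ hdet, Matrix.one_mulVec, Matrix.mulVec_smul]
  have h1 : (S⁻¹.mulVec w) ⬝ᵥ S.mulVec b = b ⬝ᵥ w := by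
    rw [Matrix.dotProduct_mulVec, ← Matrix.mulVec_transpose, hS, Matrix.mulVec_mulVec,
      Matrix.mul_nonsing_inv _ hdet, Matrix.one_mulVec, dotProduct_comm]
  simp only [add_dotProduct, dotProduct_add, smul_dotProduct, dotProduct_smul, smul_eq_mul, h1]
  rw [dotProduct_comm (S⁻¹.mulVec w) w]
  ring

theorem gram11 {n k₁ k₂ : ℕ} (X : Matrix (Fin n) (Fin k₁ ⊕ Fin k₂) ℝ) :
    (X1 X)ᵀ * X1 X = (Xᵀ * X).toBlocks₁₁ := by
  ext i j; simp [X1, Matrix.toBlocks₁₁, Matrix.mul_apply]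

theorem mulVec_restr {k₁ k₂ : ℕ} (G : Matrix (Fin k₁ ⊕ Fin k₂) (Fin k₁ ⊕ Fin k₂) ℝ)
    (b : (Fin k₁ ⊕ Fin k₂) → ℝ) (hb : b ∘ Sum.inr = 0) :
    (G.mulVec b) ∘ Sum.inl = G.toBlocks₁₁.mulVec (b ∘ Sum.inl) := by
  ext i
  have : ∀ j, b (Sum.inr j) = 0 := fun j => congrFun hb j
  simp [Matrix.mulVec, dotProduct, Matrix.toBlocks₁₁, this]

theorem dot_restr {k₁ k₂ : ℕ} (b w : (Fin k₁ ⊕ Fin k₂) → ℝ) (hb : b ∘ Sum.inr = 0) :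
    b ⬝ᵥ w = (b ∘ Sum.inl) ⬝ᵥ (w ∘ Sum.inl) := by
  have : ∀ j, b (Sum.inr j) = 0 := fun j => congrFun hb j
  simp [dotProduct, this]

theorem mavg_formula {n k₁ k₂ : ℕ} (hn : 0 < n) (X : Matrix (Fin n) (Fin k₁ ⊕ Fin k₂) ℝ)
    (hG : IsUnit (Xᵀ * X).det) (hG1 : IsUnit (Xᵀ * X).toBlocks₁₁.det)
    (α σ2 : ℝ) (hσ : 0 < σ2) (β : (Fin k₁ ⊕ Fin k₂) → ℝ) (hβ : β ∘ Sum.inr = 0) (v : Fin n → ℝ) :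
    Real.sqrt n • (mavg α σ2 X (X.mulVec β + v) - β) =
      Mfun α σ2 ((n : ℝ)⁻¹ • (Xᵀ * X)) ((Real.sqrt n)⁻¹ • Xᵀ.mulVec v) := by
  set G := Xᵀ * X with hGdef
  set w := (Real.sqrt n)⁻¹ • Xᵀ.mulVec v with hw
  set s := Real.sqrt n with hs
  have hn' : (0 : ℝ) < n := by exact_mod_cast hn
  have hs0 : 0 < s := Real.sqrt_pos.2 hn'
  have hss : s * s = n := Real.mul_self_sqrt hn'.le
  have hGs : Gᵀ = G := by rw [hGdef, Matrix.transpose_mul, Matrix.transpose_transpose]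
  have hG1s : G.toBlocks₁₁ᵀ = G.toBlocks₁₁ := by
    ext i j; exact congrFun (congrFun hGs (Sum.inl i)) (Sum.inl j)
  have hXY : Xᵀ.mulVec (X.mulVec β + v) = G.mulVec β + s • w := by
    rw [Matrix.mulVec_add, Matrix.mulVec_mulVec, hw, smul_smul, mul_inv_cancel₀ hs0.ne', one_smul]
  have hX1Y : (X1 X)ᵀ.mulVec (X.mulVec β + v) =
      G.toBlocks₁₁.mulVec (β ∘ Sum.inl) + s • (w ∘ Sum.inl) := by
    rw [← mulVec_restr G β hβ]
    ext i
    exact congrFun hXY (Sum.inl i)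
  have hU : betaU X (X.mulVec β + v) = G⁻¹.mulVec (G.mulVec β + s • w) := by
    rw [betaU, hXY]
  have hR1 : (betaR X (X.mulVec β + v)) ∘ Sum.inl =
      G.toBlocks₁₁⁻¹.mulVec (G.toBlocks₁₁.mulVec (β ∘ Sum.inl) + s • (w ∘ Sum.inl)) := by
    rw [betaR, hX1Y, gram11]; ext i; simp [hGdef]
  have hR2 : (betaR X (X.mulVec β + v)) ∘ Sum.inr = 0 := by
    rw [betaR]; ext i; simp
  have hAinv : ((n : ℝ)⁻¹ • G)⁻¹ = (n : ℝ) • G⁻¹ := by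
    have := Matrix.inv_smul' (A := G) (Units.mk0 (n : ℝ)⁻¹ (by positivity)) hG
    simpa [Units.smul_def] using this
  have hA1inv : ((n : ℝ)⁻¹ • G).toBlocks₁₁⁻¹ = (n : ℝ) • G.toBlocks₁₁⁻¹ := by
    have := Matrix.inv_smul' (A := G.toBlocks₁₁) (Units.mk0 (n : ℝ)⁻¹ (by positivity)) hG1
    have e : ((n : ℝ)⁻¹ • G).toBlocks₁₁ = (n : ℝ)⁻¹ • G.toBlocks₁₁ := by ext i j; rfl
    rw [e]
    simpa [Units.smul_def] using this
  have hq : rR X σ2 (X.mulVec β + v) - rU X σ2 (X.mulVec β + v) =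
      qfun ((n : ℝ)⁻¹ • G) w - 2 * σ2 * k₂ := by
    rw [rR, rU, ← hGdef, hU, quad_expand G hGs hG, dot_restr _ _ hR2, mulVec_restr _ _ hR2, hR1,
      quad_expand _ hG1s hG1, qfun, hAinv, hA1inv, dot_restr β _ hβ, mulVec_restr G β hβ,
      dot_restr β _ hβ]
    simp only [Matrix.smul_mulVec, dotProduct_smul, smul_eq_mul]
    rw [sq, hss]
    ring
  have hlam : lamHat α σ2 X (X.mulVec β + v) = lamfun α σ2 ((n : ℝ)⁻¹ • G) w := by
    rw [lamHat, lamfun, ← hq]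
    set a := rR X σ2 (X.mulVec β + v)
    set b := rU X σ2 (X.mulVec β + v)
    have : Real.exp (-(α * b) / σ2) = Real.exp (-(α * a) / σ2) * Real.exp (α / σ2 * (a - b)) := by
      rw [← Real.exp_add]; congr 1; field_simp; ring
    rw [this]
    have := Real.exp_pos (-(α * a) / σ2)
    have := Real.exp_pos (α / σ2 * (a - b))
    field_simp
  have hUf : s • (betaU X (X.mulVec β + v) - β) = ((n : ℝ)⁻¹ • G)⁻¹.mulVec w := by
    rw [hU, hAinv, Matrix.mulVec_add, Matrix.mulVec_mulVec, Matrix.nonsing_inv_mul _ hG,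
      Matrix.one_mulVec, Matrix.mulVec_smul, add_sub_cancel_left, smul_smul, hss,
      Matrix.smul_mulVec]
  have hRf : s • (betaR X (X.mulVec β + v) - β) = Rvec ((n : ℝ)⁻¹ • G) w := by
    ext i
    rcases i with i | i
    · have h1 := congrFun hR1 i
      rw [Matrix.mulVec_add, Matrix.mulVec_mulVec, Matrix.nonsing_inv_mul _ hG1,
        Matrix.one_mulVec, Matrix.mulVec_smul] at h1
      simp only [Function.comp_apply, Pi.add_apply, Pi.smul_apply, smul_eq_mul] at h1
      simp only [Rvec, hA1inv, Matrix.smul_mulVec, Pi.smul_apply, Pi.sub_apply, smul_eq_mul,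
        Sum.elim_inl, h1, add_sub_cancel_left]
      rw [← mul_assoc, hss]
    · have h1 := congrFun hR2 i
      have h2 := congrFun hβ i
      simp only [Function.comp_apply, Pi.zero_apply] at h1 h2
      simp [Rvec, h1, h2]
  rw [Mfun, mavg, hlam, ← hUf, ← hRf]
  ext i
  simp only [Pi.smul_apply, Pi.sub_apply, Pi.add_apply, smul_eq_mul]
  ring

theorem hfun_pos_mono (a b : ℝ) (ha : 0 < a) (hb : 0 < b) {x y : ℝ} (hx : 0 ≤ x) (hxy : x < y) :
    hfun a b x < hfun a b y := by
  unfold hfun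
  have h1 : Real.exp (-y ^ 2 / b) ≤ Real.exp (-x ^ 2 / b) := by gcongr
  have hp := Real.exp_pos (-y ^ 2 / b)
  have hd : 1 + a * Real.exp (-y ^ 2 / b) ≤ 1 + a * Real.exp (-x ^ 2 / b) := by gcongr
  rw [div_lt_div_iff₀ (by positivity) (by positivity)]
  calc x * (1 + a * Real.exp (-y ^ 2 / b)) < y * (1 + a * Real.exp (-y ^ 2 / b)) := by gcongr
    _ ≤ _ := by
      apply mul_le_mul_of_nonneg_left hd (by linarith)

theorem hfun_neg (a b x : ℝ) : hfun a b (-x) = - hfun a b x := by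
  simp [hfun, neg_div]

theorem hfun_strictMono (a b : ℝ) (ha : 0 < a) (hb : 0 < b) : StrictMono (hfun a b) := by
  intro x y hxy
  have h0 : hfun a b 0 = 0 := by simp [hfun]
  rcases le_or_gt 0 x with hx | hx
  · exact hfun_pos_mono a b ha hb hx hxy
  · have hx' : hfun a b x < 0 := by
      have := hfun_pos_mono a b ha hb (le_refl 0) (neg_pos.2 hx)
      rw [hfun_neg, h0] at this; linarith
    rcases le_or_gt 0 y with hy | hy
    · rcases hy.eq_or_lt with rfl | hy
      · rw [h0]; exact hx'
      · have := hfun_pos_mono a b ha hb (le_refl 0) hy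
        rw [h0] at this; linarith
    · have := hfun_pos_mono a b ha hb (neg_pos.2 hy).le (neg_lt_neg hxy)
      rw [hfun_neg, hfun_neg] at this; linarith

theorem hfun_surj (a b : ℝ) (ha : 0 < a) (hb : 0 < b) : Function.Surjective (hfun a b) := by
  have hc : Continuous (hfun a b) := by
    unfold hfun
    refine Continuous.div (by fun_prop) (by fun_prop) fun x => ?_
    have := Real.exp_pos (-x ^ 2 / b)
    positivity
  have key : ∀ c : ℝ, 0 ≤ c → c ≤ hfun a b ((1 + a) * c) := by
    intro c hc
    unfold hfun
    rw [le_div_iff₀ (by have := Real.exp_pos (-((1 + a) * c) ^ 2 / b); positivity)]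
    have : Real.exp (-((1 + a) * c) ^ 2 / b) ≤ 1 := by
      rw [Real.exp_le_one_iff]
      apply div_nonpos_of_nonpos_of_nonneg _ hb.le
      nlinarith [sq_nonneg ((1 + a) * c)]
    rw [mul_comm]
    gcongr
    nlinarith
  intro c
  apply mem_range_of_exists_le_of_exists_ge hc
  · refine ⟨-((1 + a) * |c|), ?_⟩
    rw [hfun_neg]
    have := key |c| (abs_nonneg _)
    linarith [neg_abs_le c]
  · exact ⟨(1 + a) * |c|, (le_abs_self c).trans (key |c| (abs_nonneg _))⟩

theorem exists_gamma (a b : ℝ) (ha : 0 < a) (hb : 0 < b) (t : ℝ) :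
    ∃ g : ℝ → ℝ, (∀ γ, hfun a b (g γ + γ) = t + γ) ∧ ∃ γ, g γ ≠ g 0 := by
  obtain ⟨f, hf⟩ := (hfun_surj a b ha hb).hasRightInverse
  refine ⟨fun γ => f (t + γ) - γ, fun γ => by simpa using hf (t + γ), ?_⟩
  by_contra hcon
  push Not at hcon
  have inj := (hfun_strictMono a b ha hb).injective
  have h0 : f 0 = 0 := inj (by rw [hf 0]; simp [hfun])
  have e0 := hcon (-t)
  have e1 := hcon (1 - t)
  have e2 : t + (1 - t) = 1 := by ring
  rw [e2] at e1
  rw [add_neg_cancel, h0] at e0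
  have h1 : f 1 = 1 := by linarith
  have h2 := hf 1
  rw [h1, hfun] at h2
  have := Real.exp_pos (-1 ^ 2 / b)
  rw [div_eq_iff (by positivity)] at h2
  have : 0 < a * Real.exp (-1 ^ 2 / b) := by positivity
  linarith

open scoped MatrixOrder Matrix.Norms.L2Operator in
theorem exists_sqrt_seq {ι : Type*} [Fintype ι] [DecidableEq ι] (A : ℕ → Matrix ι ι ℝ)
    (Q : Matrix ι ι ℝ) (hA : ∀ n, (A n).PosSemidef) (hQ : Q.PosSemidef)
    (hlim : Tendsto A atTop (𝓝 Q)) :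
    ∃ (Bn : ℕ → Matrix ι ι ℝ) (B : Matrix ι ι ℝ), Tendsto Bn atTop (𝓝 B) ∧
      (∀ n, Bn n * (Bn n)ᵀ = A n) ∧ B * Bᵀ = Q := by
  have key : ∀ S : Matrix ι ι ℝ, S.PosSemidef → CFC.sqrt S * (CFC.sqrt S)ᵀ = S := by
    intro S hS
    have h1 : star (CFC.sqrt S) = CFC.sqrt S := (CFC.sqrt_nonneg S).isSelfAdjoint
    have h2 : (CFC.sqrt S)ᵀ = CFC.sqrt S := by
      rw [← Matrix.conjTranspose_eq_transpose_of_trivial]; exact h1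
    rw [h2]
    exact CFC.sqrt_mul_sqrt_self _ hS.nonneg
  refine ⟨fun n => CFC.sqrt (A n), CFC.sqrt Q, ?_, fun n => key _ (hA n), key _ hQ⟩
  have hc := (CFC.continuousOn_sqrt (A := Matrix ι ι ℝ)) Q hQ.nonneg
  exact hc.tendsto.comp (tendsto_nhdsWithin_iff.2 ⟨hlim, Eventually.of_forall fun n => (hA n).nonneg⟩)

theorem tendsto_matrix_inv {ι : Type*} [Fintype ι] [DecidableEq ι] {A : ℕ → Matrix ι ι ℝ}
    {Q : Matrix ι ι ℝ} (hQ : Q.det ≠ 0) (hlim : Tendsto A atTop (𝓝 Q)) :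
    Tendsto (fun n => (A n)⁻¹) atTop (𝓝 Q⁻¹) := by
  simp only [Matrix.inv_def, Ring.inverse_eq_inv']
  have h1 : Tendsto (fun n => (A n).det) atTop (𝓝 Q.det) :=
    ((continuous_id.matrix_det).tendsto Q).comp hlim
  have h2 : Tendsto (fun n => (A n).adjugate) atTop (𝓝 Q.adjugate) :=
    ((continuous_id.matrix_adjugate).tendsto Q).comp hlim
  exact (h1.inv₀ hQ).smul h2

theorem gaussPi_open_pos {ι : Type*} [Fintype ι] (σ2 : ℝ) (hσ : 0 < σ2) (U : Set (ι → ℝ))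
    (hU : IsOpen U) (hne : U.Nonempty) : 0 < gaussPi ι σ2 U := by
  have h : (volume : Measure (ι → ℝ)) ≪ gaussPi ι σ2 := by
    refine withDensity_absolutelyContinuous' ?_ ?_
    · simp only [enorm2_sq]
      apply Measurable.aemeasurable
      fun_prop
    · exact ae_of_all _ fun x => by
        rw [ENNReal.ofReal_ne_zero_iff]; positivity
  rw [pos_iff_ne_zero]
  intro h0
  exact (hU.measure_pos volume hne).ne' (h h0)

theorem gaussPi_null {ι : Type*} [Fintype ι] [DecidableEq ι] (σ2 : ℝ) (N : Matrix ι ι ℝ)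
    (hN : N.det ≠ 0) (c : ι → ℝ) : ∀ᵐ z ∂(gaussPi ι σ2), ∀ i, N.mulVec z i ≠ c i := by
  have hac : gaussPi ι σ2 ≪ volume := withDensity_absolutelyContinuous _ _
  apply hac.ae_le
  change ∀ᵐ z, ∀ i, N.mulVec z i ≠ c i
  rw [ae_all_iff]
  intro i
  have h0 : volume {v : ι → ℝ | v i = c i} = 0 := by
    have := Measure.pi_hyperplane (fun _ : ι => (volume : Measure ℝ)) i (c i)
    rwa [← volume_pi] at this
  have h1 := Measure.addHaar_preimage_linearMap (volume : Measure (ι → ℝ)) (f := Matrix.toLin' N)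
    (by rwa [LinearMap.det_toLin']) {v : ι → ℝ | v i = c i}
  rw [h0, mul_zero] at h1
  rw [ae_iff]
  convert h1 using 2
  ext z; simp

theorem limset_lt {k₁ : ℕ} (σ2 : ℝ) (hσ : 0 < σ2)
    (N : Matrix (Fin k₁ ⊕ Fin 1) (Fin k₁ ⊕ Fin 1) ℝ) (hN : N.det ≠ 0)
    (t : (Fin k₁ ⊕ Fin 1) → ℝ) (c c' : ℝ) (hc : c < c') :
    gaussPi (Fin k₁ ⊕ Fin 1) σ2
        {z | (∀ i, N.mulVec z (Sum.inl i) ≤ t (Sum.inl i)) ∧ N.mulVec z (Sum.inr 0) ≤ c} <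
      gaussPi (Fin k₁ ⊕ Fin 1) σ2
        {z | (∀ i, N.mulVec z (Sum.inl i) ≤ t (Sum.inl i)) ∧ N.mulVec z (Sum.inr 0) ≤ c'} := by
  have := gaussPi_prob (ι := Fin k₁ ⊕ Fin 1) σ2 hσ
  set U : Set ((Fin k₁ ⊕ Fin 1) → ℝ) := {z | (∀ i, N.mulVec z (Sum.inl i) < t (Sum.inl i)) ∧
    (c < N.mulVec z (Sum.inr 0) ∧ N.mulVec z (Sum.inr 0) < c')} with hU
  have hcont : ∀ j, Continuous fun z : (Fin k₁ ⊕ Fin 1) → ℝ => N.mulVec z j := fun j => by fun_prop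
  have hopen : IsOpen U := by
    have e : U = (⋂ i, {z | N.mulVec z (Sum.inl i) < t (Sum.inl i)}) ∩
      ({z | c < N.mulVec z (Sum.inr 0)} ∩ {z | N.mulVec z (Sum.inr 0) < c'}) := by
      ext z; simp [hU]
    rw [e]
    exact (isOpen_iInter_of_finite fun i => isOpen_lt (hcont _) continuous_const).inter
      ((isOpen_lt continuous_const (hcont _)).inter (isOpen_lt (hcont _) continuous_const))
  have hne : U.Nonempty := by
    refine ⟨N⁻¹.mulVec (Sum.elim (fun i => t (Sum.inl i) - 1) (fun _ => (c + c') / 2)), ?_⟩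
    have : N.mulVec (N⁻¹.mulVec (Sum.elim (fun i => t (Sum.inl i) - 1) (fun _ => (c + c') / 2))) =
      Sum.elim (fun i => t (Sum.inl i) - 1) (fun _ => (c + c') / 2) := by
      rw [Matrix.mulVec_mulVec, Matrix.mul_nonsing_inv _ (isUnit_iff_ne_zero.2 hN), Matrix.one_mulVec]
    simp only [hU, Set.mem_ofPred_eq, this, Sum.elim_inl, Sum.elim_inr]
    refine ⟨fun i => by linarith, by linarith, by linarith⟩
  have hpos := gaussPi_open_pos σ2 hσ U hopen hne
  set S := {z : (Fin k₁ ⊕ Fin 1) → ℝ | (∀ i, N.mulVec z (Sum.inl i) ≤ t (Sum.inl i)) ∧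
    N.mulVec z (Sum.inr 0) ≤ c} with hS
  have hdisj : Disjoint S U := by
    rw [Set.disjoint_left]
    intro z hz hz'
    simp only [hS, hU, Set.mem_ofPred_eq] at hz hz'
    linarith [hz.2, hz'.2.1]
  calc _ < gaussPi (Fin k₁ ⊕ Fin 1) σ2 S + gaussPi (Fin k₁ ⊕ Fin 1) σ2 U :=
        ENNReal.lt_add_right (measure_ne_top _ _) hpos.ne'
    _ = gaussPi (Fin k₁ ⊕ Fin 1) σ2 (S ∪ U) := (measure_union hdisj hopen.measurableSet).symm
    _ ≤ _ := by
      apply measure_mono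
      rintro z (hz | hz)
      · exact ⟨hz.1, hz.2.trans hc.le⟩
      · exact ⟨fun i => (hz.1 i).le, hz.2.2.le⟩

theorem mavg_measurable {n k₁ k₂ : ℕ} (X : Matrix (Fin n) (Fin k₁ ⊕ Fin k₂) ℝ) (α σ2 : ℝ)
    (i : Fin k₁ ⊕ Fin k₂) : Measurable fun Y => mavg α σ2 X Y i := by
  have hU : Continuous (betaU X) := by unfold betaU; fun_prop
  have hR : Continuous (betaR X) := by
    unfold betaR
    refine continuous_pi fun i => ?_
    rcases i with i | i
    · simp only [Sum.elim_inl]; fun_prop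
    · simp only [Sum.elim_inr]; fun_prop
  have hrU : Continuous (rU X σ2) := by unfold rU; fun_prop
  have hrR : Continuous (rR X σ2) := by unfold rR; fun_prop
  have hl : Measurable (lamHat α σ2 X) := by
    unfold lamHat
    have := hrU.measurable
    have := hrR.measurable
    fun_prop
  have hUi : Measurable fun Y => betaU X Y i := ((continuous_apply i).comp hU).measurable
  have hRi : Measurable fun Y => betaR X Y i := ((continuous_apply i).comp hR).measurable
  simp only [mavg, Pi.add_apply, Pi.smul_apply, smul_eq_mul]
  fun_prop

theorem Mfun_continuous {k₁ k₂ : ℕ} (α σ2 : ℝ) (A : Matrix (Fin k₁ ⊕ Fin k₂) (Fin k₁ ⊕ Fin k₂) ℝ)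
    (i : Fin k₁ ⊕ Fin k₂) : Continuous fun w => Mfun α σ2 A w i := by
  have hR : Continuous (fun w => Rvec A w i) := by
    unfold Rvec
    rcases i with i | i
    · simp only [Sum.elim_inl]; fun_prop
    · simp only [Sum.elim_inr]; fun_prop
  have hl : Continuous (lamfun α σ2 A) := by
    unfold lamfun qfun
    refine Continuous.inv₀ (by fun_prop) fun w => ?_
    positivity
  simp only [Mfun, Pi.add_apply, Pi.smul_apply, smul_eq_mul]
  fun_prop

theorem evset_measurable {k₁ k₂ : ℕ} (α σ2 : ℝ)
    (A B : Matrix (Fin k₁ ⊕ Fin k₂) (Fin k₁ ⊕ Fin k₂) ℝ) (h t : (Fin k₁ ⊕ Fin k₂) → ℝ) :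
    MeasurableSet {z | ∀ i, Mfun α σ2 A (B.mulVec z + A.mulVec h) i - h i ≤ t i} := by
  rw [Set.ofPred_forall]
  refine MeasurableSet.iInter fun i => ?_
  have : Continuous fun z => Mfun α σ2 A (B.mulVec z + A.mulVec h) i - h i :=
    ((Mfun_continuous α σ2 A i).comp (f := fun z => B.mulVec z + A.mulVec h) (by fun_prop)).sub
      continuous_const
  exact measurableSet_le this.measurable measurable_const

theorem Fn_formula {n k₁ k₂ : ℕ} (hn : 0 < n) (X : Matrix (Fin n) (Fin k₁ ⊕ Fin k₂) ℝ)
    (hG : IsUnit (Xᵀ * X).det) (hG1 : IsUnit (Xᵀ * X).toBlocks₁₁.det)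
    (α σ2 : ℝ) (hσ : 0 < σ2) (β : (Fin k₁ ⊕ Fin k₂) → ℝ) (hβ : β ∘ Sum.inr = 0)
    (h t : (Fin k₁ ⊕ Fin k₂) → ℝ) (B : Matrix (Fin k₁ ⊕ Fin k₂) (Fin k₁ ⊕ Fin k₂) ℝ)
    (hB : B * Bᵀ = (n : ℝ)⁻¹ • (Xᵀ * X)) :
    Pmeas X (β + (Real.sqrt n)⁻¹ • h) σ2
      {Y' | ∀ i, Real.sqrt n * (mavg α σ2 X Y' i - (β + (Real.sqrt n)⁻¹ • h) i) ≤ t i} =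
    gaussPi (Fin k₁ ⊕ Fin k₂) σ2
      {z | ∀ i, Mfun α σ2 ((n : ℝ)⁻¹ • (Xᵀ * X))
        (B.mulVec z + ((n : ℝ)⁻¹ • (Xᵀ * X)).mulVec h) i - h i ≤ t i} := by
  have hn' : (0 : ℝ) < n := by exact_mod_cast hn
  have hs0 : 0 < Real.sqrt n := Real.sqrt_pos.2 hn'
  have hss : Real.sqrt n * Real.sqrt n = n := Real.mul_self_sqrt hn'.le
  have hm : MeasurableSet {Y' | ∀ i, Real.sqrt n *
      (mavg α σ2 X Y' i - (β + (Real.sqrt n)⁻¹ • h) i) ≤ t i} := by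
    rw [Set.ofPred_forall]
    refine MeasurableSet.iInter fun i => ?_
    exact measurableSet_le (((mavg_measurable X α σ2 i).sub_const _).const_mul _) measurable_const
  set A := (n : ℝ)⁻¹ • (Xᵀ * X) with hA
  set s := Real.sqrt n with hs
  have hmap := gaussPi_map_eq σ2 hσ (s⁻¹ • Xᵀ) B (by
    rw [hB, Matrix.transpose_smul, Matrix.transpose_transpose, Matrix.smul_mul, Matrix.mul_smul,
      smul_smul, ← mul_inv, hss])
  have hmw := evset_measurable α σ2 A 1 h t
  simp only [Matrix.one_mulVec] at hmw
  have e1 : gaussPi (Fin k₁ ⊕ Fin k₂) σ2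
      {z | ∀ i, Mfun α σ2 A (B.mulVec z + A.mulVec h) i - h i ≤ t i} =
      ((gaussPi (Fin k₁ ⊕ Fin k₂) σ2).map (fun z => B.mulVec z))
        {w | ∀ i, Mfun α σ2 A (w + A.mulVec h) i - h i ≤ t i} := by
    rw [Measure.map_apply (by fun_prop) hmw]; rfl
  rw [e1, ← hmap, Measure.map_apply (by fun_prop) hmw, Pmeas_apply _ _ _ _ hm]
  congr 1
  ext u
  simp only [Set.mem_preimage, Set.mem_ofPred_eq]
  have e2 : X.mulVec (β + s⁻¹ • h) + u = X.mulVec β + (s⁻¹ • X.mulVec h + u) := by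
    rw [Matrix.mulVec_add, Matrix.mulVec_smul, add_assoc]
  have e3 : s⁻¹ • Xᵀ.mulVec (s⁻¹ • X.mulVec h + u) = (s⁻¹ • Xᵀ).mulVec u + A.mulVec h := by
    rw [Matrix.mulVec_add, Matrix.mulVec_smul, Matrix.mulVec_mulVec, smul_add, smul_smul,
      ← mul_inv, hss, hA, Matrix.smul_mulVec, Matrix.smul_mulVec, add_comm]
  have hf := mavg_formula hn X hG hG1 α σ2 hσ β hβ (s⁻¹ • X.mulVec h + u)
  rw [e3, ← e2] at hf
  refine forall_congr' fun i => ?_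
  have hfi := congrFun hf i
  simp only [Pi.smul_apply, Pi.sub_apply, smul_eq_mul] at hfi
  rw [← hfi]
  simp only [Pi.add_apply, Pi.smul_apply, smul_eq_mul]
  have : s * (mavg α σ2 X (X.mulVec (β + s⁻¹ • h) + u) i - (β i + s⁻¹ * h i)) =
      s * (mavg α σ2 X (X.mulVec (β + s⁻¹ • h) + u) i - β i) - h i := by
    field_simp
    ring
  rw [this]

theorem Mfun_tendsto {k₁ k₂ : ℕ} (α σ2 : ℝ)
    (A : ℕ → Matrix (Fin k₁ ⊕ Fin k₂) (Fin k₁ ⊕ Fin k₂) ℝ)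
    (Q : Matrix (Fin k₁ ⊕ Fin k₂) (Fin k₁ ⊕ Fin k₂) ℝ) (hQ : Q.det ≠ 0)
    (hQ1 : Q.toBlocks₁₁.det ≠ 0) (hA : Tendsto A atTop (𝓝 Q)) (w : ℕ → (Fin k₁ ⊕ Fin k₂) → ℝ)
    (w0 : (Fin k₁ ⊕ Fin k₂) → ℝ) (hw : Tendsto w atTop (𝓝 w0)) :
    Tendsto (fun n => Mfun α σ2 (A n) (w n)) atTop (𝓝 (Mfun α σ2 Q w0)) := by
  have mv : ∀ {ι : Type} [Fintype ι] (S : ℕ → Matrix ι ι ℝ) (S0 : Matrix ι ι ℝ) (x : ℕ → ι → ℝ)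
      (x0 : ι → ℝ), Tendsto S atTop (𝓝 S0) → Tendsto x atTop (𝓝 x0) →
      Tendsto (fun n => (S n).mulVec (x n)) atTop (𝓝 (S0.mulVec x0)) := by
    intro ι _ S S0 x x0 hS hx
    have hc : Continuous fun p : Matrix ι ι ℝ × (ι → ℝ) => p.1.mulVec p.2 :=
      continuous_fst.matrix_mulVec continuous_snd
    exact (hc.tendsto (S0, x0)).comp (hS.prodMk_nhds hx)
  have dp : ∀ {ι : Type} [Fintype ι] (y : ℕ → ι → ℝ) (y0 : ι → ℝ) (x : ℕ → ι → ℝ)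
      (x0 : ι → ℝ), Tendsto y atTop (𝓝 y0) → Tendsto x atTop (𝓝 x0) →
      Tendsto (fun n => (y n) ⬝ᵥ (x n)) atTop (𝓝 (y0 ⬝ᵥ x0)) := by
    intro ι _ y y0 x x0 hy hx
    have hc : Continuous fun p : (ι → ℝ) × (ι → ℝ) => p.1 ⬝ᵥ p.2 :=
      continuous_fst.dotProduct continuous_snd
    exact (hc.tendsto (y0, x0)).comp (hy.prodMk_nhds hx)
  have hA1 : Tendsto (fun n => (A n).toBlocks₁₁) atTop (𝓝 Q.toBlocks₁₁) := by
    have hc : Continuous fun S : Matrix (Fin k₁ ⊕ Fin k₂) (Fin k₁ ⊕ Fin k₂) ℝ => S.toBlocks₁₁ :=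
      continuous_id.matrix_submatrix Sum.inl Sum.inl
    exact (hc.tendsto Q).comp hA
  have hw1 : Tendsto (fun n => w n ∘ Sum.inl) atTop (𝓝 (w0 ∘ Sum.inl)) := by
    have hc : Continuous fun v : (Fin k₁ ⊕ Fin k₂) → ℝ => v ∘ (Sum.inl : Fin k₁ → Fin k₁ ⊕ Fin k₂) :=
      continuous_pi fun i => continuous_apply _
    exact (hc.tendsto w0).comp hw
  have hAi := tendsto_matrix_inv hQ hA
  have hA1i := tendsto_matrix_inv hQ1 hA1
  have hx := mv _ _ _ _ hAi hw
  have hx1 := mv _ _ _ _ hA1i hw1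
  have hq : Tendsto (fun n => qfun (A n) (w n)) atTop (𝓝 (qfun Q w0)) :=
    (dp _ _ _ _ hw hx).sub (dp _ _ _ _ hw1 hx1)
  have hl : Tendsto (fun n => lamfun α σ2 (A n) (w n)) atTop (𝓝 (lamfun α σ2 Q w0)) := by
    unfold lamfun
    refine Tendsto.inv₀ ?_ (by positivity)
    refine Tendsto.const_add _ ((Real.continuous_exp.tendsto _).comp ?_)
    exact (hq.sub_const _).const_mul _
  have hR : Tendsto (fun n => Rvec (A n) (w n)) atTop (𝓝 (Rvec Q w0)) := by
    rw [tendsto_pi_nhds]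
    rintro (i | i)
    · exact (tendsto_pi_nhds.1 hx1) i
    · exact tendsto_const_nhds
  unfold Mfun
  exact (hl.smul hR).add ((hl.const_sub _).smul hx)

theorem evset_tendsto {k₁ k₂ : ℕ} (α σ2 : ℝ) (hσ : 0 < σ2)
    (A Bn : ℕ → Matrix (Fin k₁ ⊕ Fin k₂) (Fin k₁ ⊕ Fin k₂) ℝ)
    (Q B : Matrix (Fin k₁ ⊕ Fin k₂) (Fin k₁ ⊕ Fin k₂) ℝ) (hQ : Q.det ≠ 0)
    (hQ1 : Q.toBlocks₁₁.det ≠ 0) (hA : Tendsto A atTop (𝓝 Q)) (hB : Tendsto Bn atTop (𝓝 B))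
    (h t : (Fin k₁ ⊕ Fin k₂) → ℝ)
    (hnull : ∀ᵐ z ∂(gaussPi (Fin k₁ ⊕ Fin k₂) σ2), ∀ i,
      Mfun α σ2 Q (B.mulVec z + Q.mulVec h) i - h i ≠ t i) :
    Tendsto (fun n => gaussPi (Fin k₁ ⊕ Fin k₂) σ2
        {z | ∀ i, Mfun α σ2 (A n) ((Bn n).mulVec z + (A n).mulVec h) i - h i ≤ t i}) atTop
      (𝓝 (gaussPi (Fin k₁ ⊕ Fin k₂) σ2
        {z | ∀ i, Mfun α σ2 Q (B.mulVec z + Q.mulVec h) i - h i ≤ t i})) := by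
  have := gaussPi_prob (ι := Fin k₁ ⊕ Fin k₂) σ2 hσ
  refine tendsto_measure_of_ae_tendsto_indicator_of_isFiniteMeasure atTop
    (evset_measurable α σ2 Q B h t) (fun n => evset_measurable α σ2 (A n) (Bn n) h t) ?_
  filter_upwards [hnull] with z hz
  have hmv : ∀ (S : ℕ → Matrix (Fin k₁ ⊕ Fin k₂) (Fin k₁ ⊕ Fin k₂) ℝ) S0
      (x : (Fin k₁ ⊕ Fin k₂) → ℝ), Tendsto S atTop (𝓝 S0) →
      Tendsto (fun n => (S n).mulVec x) atTop (𝓝 (S0.mulVec x)) := by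
    intro S S0 x hS
    have hc : Continuous fun T : Matrix (Fin k₁ ⊕ Fin k₂) (Fin k₁ ⊕ Fin k₂) ℝ => T.mulVec x :=
      continuous_id.matrix_mulVec continuous_const
    exact (hc.tendsto S0).comp hS
  have hT := Mfun_tendsto α σ2 A Q hQ hQ1 hA _ _ ((hmv _ _ z hB).add (hmv _ _ h hA))
  have hTi : ∀ i, Tendsto (fun n => Mfun α σ2 (A n) ((Bn n).mulVec z + (A n).mulVec h) i - h i)
      atTop (𝓝 (Mfun α σ2 Q (B.mulVec z + Q.mulVec h) i - h i)) :=
    fun i => ((tendsto_pi_nhds.1 hT) i).sub_const _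
  have hev : ∀ i, ∀ᶠ n in atTop, (Mfun α σ2 (A n) ((Bn n).mulVec z + (A n).mulVec h) i - h i ≤ t i ↔
      Mfun α σ2 Q (B.mulVec z + Q.mulVec h) i - h i ≤ t i) := by
    intro i
    rcases lt_or_gt_of_ne (hz i) with hlt | hgt
    · filter_upwards [(hTi i).eventually_lt_const hlt] with n hn
      exact ⟨fun _ => hlt.le, fun _ => hn.le⟩
    · filter_upwards [(hTi i).eventually_const_lt hgt] with n hn
      exact ⟨fun h' => absurd h' (not_le.2 hn), fun h' => absurd h' (not_le.2 hgt)⟩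
  filter_upwards [eventually_all.2 hev] with n hn
  exact forall_congr' hn

theorem Mfun_block {k₁ : ℕ} (α σ2 : ℝ) (hα : 0 < α) (hσ : 0 < σ2)
    (Q : Matrix (Fin k₁ ⊕ Fin 1) (Fin k₁ ⊕ Fin 1) ℝ) (hQ : Q.det ≠ 0)
    (hQ1 : Q.toBlocks₁₁.det ≠ 0) (h12 : ∀ i j, Q (Sum.inl i) (Sum.inr j) = 0)
    (h21 : ∀ i j, Q (Sum.inr i) (Sum.inl j) = 0) (hq : 0 < Q (Sum.inr 0) (Sum.inr 0))
    (x : (Fin k₁ ⊕ Fin 1) → ℝ) :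
    (∀ i, Mfun α σ2 Q (Q.mulVec x) (Sum.inl i) = x (Sum.inl i)) ∧
    Mfun α σ2 Q (Q.mulVec x) (Sum.inr 0) =
      hfun (Real.exp (2 * α)) (σ2 / (α * Q (Sum.inr 0) (Sum.inr 0))) (x (Sum.inr 0)) := by
  have e1 : Q⁻¹.mulVec (Q.mulVec x) = x := by
    rw [Matrix.mulVec_mulVec, Matrix.nonsing_inv_mul _ (isUnit_iff_ne_zero.2 hQ),
      Matrix.one_mulVec]
  have e2 : (Q.mulVec x) ∘ Sum.inl = Q.toBlocks₁₁.mulVec (x ∘ Sum.inl) := by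
    ext i
    simp [Matrix.mulVec, dotProduct, Matrix.toBlocks₁₁, h12]
  have e3 : Q.toBlocks₁₁⁻¹.mulVec ((Q.mulVec x) ∘ Sum.inl) = x ∘ Sum.inl := by
    rw [e2, Matrix.mulVec_mulVec, Matrix.nonsing_inv_mul _ (isUnit_iff_ne_zero.2 hQ1),
      Matrix.one_mulVec]
  have e4 : Q.mulVec x (Sum.inr 0) = Q (Sum.inr 0) (Sum.inr 0) * x (Sum.inr 0) := by
    simp [Matrix.mulVec, dotProduct, h21]
  have e5 : qfun Q (Q.mulVec x) = Q (Sum.inr 0) (Sum.inr 0) * x (Sum.inr 0) ^ 2 := by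
    unfold qfun
    rw [e1, e3]
    simp only [dotProduct, Fintype.sum_sum_type, Function.comp, Finset.univ_unique,
      Fin.default_eq_zero, Finset.sum_singleton, e4]
    ring
  constructor
  · intro i
    simp only [Mfun, Rvec, e1, e3, Pi.add_apply, Pi.smul_apply, smul_eq_mul, Sum.elim_inl,
      Function.comp]
    ring
  · simp only [Mfun, Rvec, e1, e3, Pi.add_apply, Pi.smul_apply, smul_eq_mul, Sum.elim_inr,
      lamfun, e5, hfun]
    set q := Q (Sum.inr 0) (Sum.inr 0)
    set y := x (Sum.inr 0)
    have e6 : Real.exp (α / σ2 * (q * y ^ 2 - 2 * σ2 * ((1 : ℕ) : ℝ))) =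
        (Real.exp (2 * α) * Real.exp (-y ^ 2 / (σ2 / (α * q))))⁻¹ := by
      rw [← Real.exp_add, ← Real.exp_neg]
      congr 1
      field_simp
      push_cast
      ring
    rw [e6]
    have : 0 < Real.exp (2 * α) * Real.exp (-y ^ 2 / (σ2 / (α * q))) := by positivity
    generalize Real.exp (2 * α) * Real.exp (-y ^ 2 / (σ2 / (α * q))) = E at this ⊢
    field_simp
    ring

theorem det_unit_of_smul {ι : Type*} [Fintype ι] [DecidableEq ι] (c : ℝ) (G : Matrix ι ι ℝ)
    (hc : c ≠ 0) (h : (c • G).det ≠ 0) : IsUnit G.det := by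
  rw [Matrix.det_smul] at h
  exact isUnit_iff_ne_zero.2 (right_ne_zero_of_mul h)

/-- Limits of the finite-sample distribution functions along local alternatives. -/
theorem Fn_limit {k₁ : ℕ} (X : ∀ n : ℕ, Matrix (Fin n) (Fin k₁ ⊕ Fin 1) ℝ)
    (Q : Matrix (Fin k₁ ⊕ Fin 1) (Fin k₁ ⊕ Fin 1) ℝ) (hQ : Q.PosDef)
    (hQ12 : Q.toBlocks₁₂ = 0)
    (hlim : Tendsto (fun n : ℕ => (n : ℝ)⁻¹ • ((X n)ᵀ * X n)) atTop (𝓝 Q))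
    (σ2 α : ℝ) (hσ : 0 < σ2) (hα : 0 < α) (t : (Fin k₁ ⊕ Fin 1) → ℝ) :
    ∃ (p : ℝ → ℝ) (γ : ℝ), p γ ≠ p 0 ∧
      ∀ (γ : ℝ) (β : (Fin k₁ ⊕ Fin 1) → ℝ), β ∘ Sum.inr = 0 →
        Tendsto (fun n : ℕ => (Pmeas (X n)
            (β + (Real.sqrt n)⁻¹ • (Sum.elim (fun _ => 0) (fun _ => γ))) σ2
            {Y' | ∀ i, Real.sqrt n * (mavg α σ2 (X n) Y' i -
              (β + (Real.sqrt n)⁻¹ • (Sum.elim (fun _ => 0) (fun _ => γ) :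
                (Fin k₁ ⊕ Fin 1) → ℝ)) i) ≤ t i}).toReal)
          atTop (𝓝 (p γ)) := by
  have hQd : Q.det ≠ 0 := hQ.det_pos.ne'
  have hQ1p : Q.toBlocks₁₁.PosDef := by
    have := hQ.submatrix (e := (Sum.inl : Fin k₁ → Fin k₁ ⊕ Fin 1)) Sum.inl_injective
    exact this
  have hQ1 : Q.toBlocks₁₁.det ≠ 0 := hQ1p.det_pos.ne'
  have h12 : ∀ i j, Q (Sum.inl i) (Sum.inr j) = 0 := fun i j => congrFun (congrFun hQ12 i) j
  have h21 : ∀ i j, Q (Sum.inr i) (Sum.inl j) = 0 := fun i j => by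
    have := hQ.1.apply (Sum.inr i) (Sum.inl j)
    rw [← this, h12]; simp
  have hq : 0 < Q (Sum.inr 0) (Sum.inr 0) := hQ.diag_pos
  have hpsd : ∀ n : ℕ, ((n : ℝ)⁻¹ • ((X n)ᵀ * X n)).PosSemidef := fun n => by
    have := Matrix.posSemidef_conjTranspose_mul_self (X n)
    rw [Matrix.conjTranspose_eq_transpose_of_trivial] at this
    exact this.smul (by positivity)
  obtain ⟨Bn, B, hBlim, hBn, hB⟩ := exists_sqrt_seq _ Q hpsd hQ.posSemidef hlim
  have hBd : B.det ≠ 0 := by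
    intro h
    apply hQd
    rw [← hB, Matrix.det_mul, h, zero_mul]
  have hN : (Q⁻¹ * B).det ≠ 0 := by
    rw [Matrix.det_mul]
    refine mul_ne_zero ?_ hBd
    exact (Matrix.isUnit_nonsing_inv_det _ (isUnit_iff_ne_zero.2 hQd)).ne_zero
  set a := Real.exp (2 * α) with ha
  set b := σ2 / (α * Q (Sum.inr 0) (Sum.inr 0)) with hb
  have ha0 : 0 < a := Real.exp_pos _
  have hb0 : 0 < b := by positivity
  obtain ⟨g, hg, γ, hγ⟩ := exists_gamma a b ha0 hb0 (t (Sum.inr 0))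
  have hP := gaussPi_prob (ι := Fin k₁ ⊕ Fin 1) σ2 hσ
  have hmono := hfun_strictMono a b ha0 hb0
  have hform : ∀ γ z, (∀ i, Mfun α σ2 Q (B.mulVec z + Q.mulVec
        (Sum.elim (fun _ => 0) (fun _ => γ))) (Sum.inl i) = (Q⁻¹ * B).mulVec z (Sum.inl i)) ∧
      Mfun α σ2 Q (B.mulVec z + Q.mulVec (Sum.elim (fun _ => 0) (fun _ => γ))) (Sum.inr 0) =
        hfun a b ((Q⁻¹ * B).mulVec z (Sum.inr 0) + γ) := by
    intro γ z
    have e : B.mulVec z + Q.mulVec (Sum.elim (fun _ => 0) (fun _ => γ)) =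
        Q.mulVec ((Q⁻¹ * B).mulVec z + Sum.elim (fun _ => 0) (fun _ => γ)) := by
      rw [Matrix.mulVec_add, Matrix.mulVec_mulVec, ← Matrix.mul_assoc,
        Matrix.mul_nonsing_inv _ (isUnit_iff_ne_zero.2 hQd), Matrix.one_mul]
    rw [e]
    have := Mfun_block α σ2 hα hσ Q hQd hQ1 h12 h21 hq
      ((Q⁻¹ * B).mulVec z + Sum.elim (fun _ => 0) (fun _ => γ))
    simpa using this
  refine ⟨fun γ => (gaussPi (Fin k₁ ⊕ Fin 1) σ2
        {z | (∀ i, (Q⁻¹ * B).mulVec z (Sum.inl i) ≤ t (Sum.inl i)) ∧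
          (Q⁻¹ * B).mulVec z (Sum.inr 0) ≤ g γ}).toReal, γ, ?_, ?_⟩
  · intro h
    rw [ENNReal.toReal_eq_toReal_iff' (measure_ne_top _ _) (measure_ne_top _ _)] at h
    rcases lt_or_gt_of_ne hγ with hlt | hlt
    · exact (limset_lt σ2 hσ _ hN t _ _ hlt).ne h
    · exact (limset_lt σ2 hσ _ hN t _ _ hlt).ne' h
  · intro γ β hβ
    have hset : {z | (∀ i, (Q⁻¹ * B).mulVec z (Sum.inl i) ≤ t (Sum.inl i)) ∧
          (Q⁻¹ * B).mulVec z (Sum.inr 0) ≤ g γ} =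
        {z | ∀ i, Mfun α σ2 Q (B.mulVec z + Q.mulVec (Sum.elim (fun _ => 0) (fun _ => γ))) i -
          (Sum.elim (fun _ => 0) (fun _ => γ) : (Fin k₁ ⊕ Fin 1) → ℝ) i ≤ t i} := by
      ext z
      simp only [Set.mem_ofPred_eq, Sum.forall, Sum.elim_inl, Sum.elim_inr, Fin.forall_fin_one,
        (hform γ z).1, (hform γ z).2, add_zero, sub_le_iff_le_add, ← hg γ, hmono.le_iff_le,
        add_le_add_iff_right]
    have hnull : ∀ᵐ z ∂(gaussPi (Fin k₁ ⊕ Fin 1) σ2), ∀ i,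
        Mfun α σ2 Q (B.mulVec z + Q.mulVec (Sum.elim (fun _ => 0) (fun _ => γ))) i -
          (Sum.elim (fun _ => 0) (fun _ => γ) : (Fin k₁ ⊕ Fin 1) → ℝ) i ≠ t i := by
      filter_upwards [gaussPi_null σ2 (Q⁻¹ * B) hN
        (Sum.elim (t ∘ Sum.inl) (fun _ => g γ))] with z hz
      rw [Sum.forall] at hz ⊢
      refine ⟨fun i => ?_, fun i => ?_⟩
      · rw [(hform γ z).1, Sum.elim_inl, sub_zero]
        exact hz.1 i
      · obtain rfl : i = 0 := Subsingleton.elim _ _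
        rw [(hform γ z).2, Sum.elim_inr]
        intro h
        have h' := sub_eq_iff_eq_add.1 h
        rw [← hg γ] at h'
        exact hz.2 0 (add_right_cancel (hmono.injective h'))
    have hT := evset_tendsto α σ2 hσ _ Bn Q B hQd hQ1 hlim hBlim
      (Sum.elim (fun _ => 0) (fun _ => γ)) t hnull
    rw [← hset] at hT
    have hT' := (ENNReal.tendsto_toReal (measure_ne_top _ _)).comp hT
    refine hT'.congr' ?_
    have d1 : ∀ᶠ n : ℕ in atTop, ((n : ℝ)⁻¹ • ((X n)ᵀ * X n)).det ≠ 0 :=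
      (((Continuous.matrix_det continuous_id).tendsto Q).comp hlim).eventually_ne hQd
    have d2 : ∀ᶠ n : ℕ in atTop, ((n : ℝ)⁻¹ • ((X n)ᵀ * X n)).toBlocks₁₁.det ≠ 0 := by
      have hc : Continuous fun M : Matrix (Fin k₁ ⊕ Fin 1) (Fin k₁ ⊕ Fin 1) ℝ =>
          M.toBlocks₁₁.det :=
        Continuous.matrix_det (continuous_id.matrix_submatrix Sum.inl Sum.inl)
      exact ((hc.tendsto Q).comp hlim).eventually_ne hQ1
    filter_upwards [d1, d2, eventually_gt_atTop 0] with n hn1 hn2 hn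
    have hn' : ((n : ℝ)⁻¹) ≠ 0 := by positivity
    simp only [Function.comp]
    rw [Fn_formula hn (X n) (det_unit_of_smul _ _ hn' hn1)
      (det_unit_of_smul _ (((X n)ᵀ * X n).toBlocks₁₁) hn' hn2) α σ2 hσ β hβ _ t (Bn n) (hBn n)]

theorem main_k1 {k₁ : ℕ} (X : ∀ n : ℕ, Matrix (Fin n) (Fin k₁ ⊕ Fin 1) ℝ)
    (Q : Matrix (Fin k₁ ⊕ Fin 1) (Fin k₁ ⊕ Fin 1) ℝ) (hQ : Q.PosDef)
    (hQ12 : Q.toBlocks₁₂ = 0)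
    (hlim : Tendsto (fun n : ℕ => (n : ℝ)⁻¹ • ((X n)ᵀ * X n)) atTop (𝓝 Q))
    (σ2 α : ℝ) (hσ : 0 < σ2) (hα : 0 < α) :
    ∀ t : (Fin k₁ ⊕ Fin 1) → ℝ, ∃ δ₀ : ℝ, 0 < δ₀ ∧ ∃ ρ₀ : ℝ, 0 < ρ₀ ∧
      ∀ β : (Fin k₁ ⊕ Fin 1) → ℝ, β ∘ Sum.inr = 0 →
        ∀ Fhat : ∀ n : ℕ, (Fin n → ℝ) → ℝ, (∀ n, Measurable (Fhat n)) →
          (∀ δ : ℝ, 0 < δ →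
            Tendsto (fun n : ℕ => Pmeas (X n) β σ2
                {Y | δ < |Fhat n Y -
                  (Pmeas (X n) β σ2
                    {Y' | ∀ i, Real.sqrt n * (mavg α σ2 (X n) Y' i - β i) ≤
                      t i}).toReal|})
              atTop (𝓝 (0 : ℝ≥0∞))) →
          Tendsto (fun n : ℕ => ⨆ ϑ : (Fin k₁ ⊕ Fin 1) → ℝ,
              ⨆ (_ : enorm2 (ϑ - β) < ρ₀ / Real.sqrt n),
              Pmeas (X n) ϑ σ2
                {Y | δ₀ < |Fhat n Y -
                  (Pmeas (X n) ϑ σ2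
                    {Y' | ∀ i, Real.sqrt n * (mavg α σ2 (X n) Y' i - ϑ i) ≤
                      t i}).toReal|})
            atTop (𝓝 (1 : ℝ≥0∞)) := by
  intro t
  obtain ⟨p, γ, hpγ, hF⟩ := Fn_limit X Q hQ hQ12 hlim σ2 α hσ hα t
  have hD : 0 < |p γ - p 0| := abs_pos.2 (sub_ne_zero.2 hpγ)
  refine ⟨|p γ - p 0| / 4, by positivity, |γ| + 1, by positivity, ?_⟩
  intro β hβ Fhat hFm hcons
  set D := |p γ - p 0| with hDdef
  have hF0 := hF 0 β hβ
  have hz : (Sum.elim (fun _ => 0) (fun _ => 0) : (Fin k₁ ⊕ Fin 1) → ℝ) = 0 := by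
    ext i; rcases i with i | i <;> rfl
  simp only [hz, smul_zero, add_zero] at hF0
  have hFγ := hF γ β hβ
  set h : (Fin k₁ ⊕ Fin 1) → ℝ := Sum.elim (fun _ => 0) (fun _ => γ) with hh
  set Eset : ∀ n : ℕ, Set (Fin n → ℝ) := fun n => {Y | D / 4 < |Fhat n Y -
    (Pmeas (X n) β σ2
      {Y' | ∀ i, Real.sqrt n * (mavg α σ2 (X n) Y' i - β i) ≤ t i}).toReal|} with hE
  have hEm : ∀ n, MeasurableSet (Eset n) := fun n =>
    measurableSet_lt measurable_const (((hFm n).sub measurable_const).abs)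
  have hE0 := hcons (D / 4) (by positivity)
  have hbd : ∀ᶠ n : ℕ in atTop, ((β + (Real.sqrt n)⁻¹ • h) - β) ⬝ᵥ
      ((X n)ᵀ * X n).mulVec ((β + (Real.sqrt n)⁻¹ • h) - β) ≤ h ⬝ᵥ Q.mulVec h + 1 := by
    have hc : Continuous fun M : Matrix (Fin k₁ ⊕ Fin 1) (Fin k₁ ⊕ Fin 1) ℝ =>
      h ⬝ᵥ M.mulVec h := by fun_prop
    have := ((hc.tendsto Q).comp hlim).eventually_lt_const (lt_add_one _)
    filter_upwards [this] with n hn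
    refine le_of_eq_of_le ?_ hn.le
    simp only [Function.comp, add_sub_cancel_left, smul_dotProduct, Matrix.mulVec_smul,
      dotProduct_smul, Matrix.smul_mulVec, smul_eq_mul]
    rw [← mul_assoc, ← mul_inv, Real.mul_self_sqrt (Nat.cast_nonneg n)]
  have hEγ := Pmeas_contig_seq X β (fun n => β + (Real.sqrt n)⁻¹ • h) σ2 hσ Eset hEm _ hbd hE0
  have hlow : Tendsto (fun n : ℕ => 1 - Pmeas (X n) (β + (Real.sqrt n)⁻¹ • h) σ2 (Eset n))
      atTop (𝓝 (1 : ℝ≥0∞)) := by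
    have := ENNReal.Tendsto.sub (tendsto_const_nhds (x := (1 : ℝ≥0∞)) (f := atTop)) hEγ
      (Or.inl ENNReal.one_ne_top)
    simpa using this
  refine tendsto_of_tendsto_of_tendsto_of_le_of_le' hlow tendsto_const_nhds ?_
    (Eventually.of_forall fun n => iSup_le fun ϑ => iSup_le fun _ => ?_)
  · have hdiff : ∀ᶠ n in atTop, _ := ((hFγ.sub hF0).abs).eventually_const_lt
      (u := D / 2) (by rw [← hDdef]; linarith)
    filter_upwards [hdiff, eventually_gt_atTop 0] with n hn hn0
    have hs : 0 < Real.sqrt n := Real.sqrt_pos.2 (by exact_mod_cast hn0)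
    have hnorm : enorm2 ((β + (Real.sqrt n)⁻¹ • h) - β) < (|γ| + 1) / Real.sqrt n := by
      rw [add_sub_cancel_left, enorm2]
      have : ∑ i, ((Real.sqrt n)⁻¹ • h) i ^ 2 = ((Real.sqrt n)⁻¹ * γ) ^ 2 := by
        simp [hh, Fintype.sum_sum_type]
      rw [this, Real.sqrt_sq_eq_abs, abs_mul, abs_inv, abs_of_pos hs, div_eq_inv_mul]
      gcongr
      linarith
    refine le_trans ?_ (le_iSup₂_of_le (β + (Real.sqrt n)⁻¹ • h) hnorm le_rfl)
    have := Pmeas_prob (X n) (β + (Real.sqrt n)⁻¹ • h) σ2 hσ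
    rw [← prob_compl_eq_one_sub (hEm n)]
    refine measure_mono fun Y hY => ?_
    have hY' : |Fhat n Y - (Pmeas (X n) β σ2
      {Y' | ∀ i, Real.sqrt n * (mavg α σ2 (X n) Y' i - β i) ≤ t i}).toReal| ≤ D / 4 :=
      not_lt.1 hY
    show D / 4 < |_ - _|
    generalize (Pmeas (X n) β σ2
      {Y' | ∀ i, Real.sqrt n * (mavg α σ2 (X n) Y' i - β i) ≤ t i}).toReal = f0 at hY' hn
    generalize (Pmeas (X n) (β + (Real.sqrt n)⁻¹ • h) σ2 {Y' | ∀ i, Real.sqrt n *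
      (mavg α σ2 (X n) Y' i - (β + (Real.sqrt n)⁻¹ • h) i) ≤ t i}).toReal = f1 at hn ⊢
    have htri := abs_sub_le f1 (Fhat n Y) f0
    rw [abs_sub_comm f1 (Fhat n Y)] at htri
    linarith
  · have := Pmeas_prob (X n) ϑ σ2 hσ
    exact prob_le_one

/-- impossibility result. Any estimator of `F_{n,β,σ}(t)` that is consistent
at a point `β` of the restricted model suffers from the worst-case breakdown (17) over
shrinking balls around `β`. -/
theorem statement12 {k₁ k₂ : ℕ} (hk₁ : 0 < k₁) (hk₂ : k₂ = 1)
    (X : ∀ n : ℕ, Matrix (Fin n) (Fin k₁ ⊕ Fin k₂) ℝ)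
    (hX : ∀ n, k₁ + k₂ ≤ n → (X n).rank = k₁ + k₂)
    (Q : Matrix (Fin k₁ ⊕ Fin k₂) (Fin k₁ ⊕ Fin k₂) ℝ) (hQ : Q.PosDef)
    (hQ12 : Q.toBlocks₁₂ = 0)
    (hlim : Tendsto (fun n : ℕ => (n : ℝ)⁻¹ • ((X n)ᵀ * X n)) atTop (𝓝 Q))
    (σ α : ℝ) (hσ : 0 < σ) (hα : 0 < α) :
    ∀ t : (Fin k₁ ⊕ Fin k₂) → ℝ, ∃ δ₀ : ℝ, 0 < δ₀ ∧ ∃ ρ₀ : ℝ, 0 < ρ₀ ∧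
      ∀ β : (Fin k₁ ⊕ Fin k₂) → ℝ, β ∘ Sum.inr = 0 →
        ∀ Fhat : ∀ n : ℕ, (Fin n → ℝ) → ℝ, (∀ n, Measurable (Fhat n)) →
          (∀ δ : ℝ, 0 < δ →
            Tendsto (fun n : ℕ => Pmeas (X n) β (σ ^ 2)
                {Y | δ < |Fhat n Y -
                  (Pmeas (X n) β (σ ^ 2)
                    {Y' | ∀ i, Real.sqrt n * (mavg α (σ ^ 2) (X n) Y' i - β i) ≤
                      t i}).toReal|})
              atTop (𝓝 (0 : ℝ≥0∞))) →
          Tendsto (fun n : ℕ => ⨆ ϑ : (Fin k₁ ⊕ Fin k₂) → ℝ,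
              ⨆ (_ : enorm2 (ϑ - β) < ρ₀ / Real.sqrt n),
              Pmeas (X n) ϑ (σ ^ 2)
                {Y | δ₀ < |Fhat n Y -
                  (Pmeas (X n) ϑ (σ ^ 2)
                    {Y' | ∀ i, Real.sqrt n * (mavg α (σ ^ 2) (X n) Y' i - ϑ i) ≤
                      t i}).toReal|})
            atTop (𝓝 (1 : ℝ≥0∞)) := by
  subst hk₂
  exact main_k1 X Q hQ hQ12 hlim (σ ^ 2) α (by positivity) hα

end
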